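/- Under the labelled graphon model satisfying Assumptions 1 and 2, the empirical distribution function of the normalized degrees satisfies a Glivenko–Cantelli-type law: sup_{x ∈ ℝ} | (1/n) Σ_{i=1}^n 1{(d_i − n p_n)/√(n p_n(1 − p_n)) ≤ x} − F*(x) | converges in probability to 0 as n → ∞, where F*(x) = κ F_1(x) + (1 − κ) F_2(x), F_1(x) = P(Z + μ(U^{(1)}) ≤ x) and F_2(x) = P(Z + μ(U^{(2)}) ≤ x) with Z a standard normal random variable independent of U^{(1)} ~ Uniform(0, κ) and U^{(2)} ~ Uniform(κ, 1). -/

import Mathlib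

/-!
STATEMENT 5: Glivenko–Cantelli-type law for normalized degrees under the
labelled graphon model satisfying Assumptions 1 and 2:
sup_x |(1/n) Σᵢ 1{(dᵢ − n pₙ)/√(n pₙ(1−pₙ)) ≤ x} − F*(x)| →ᵖ 0, where
F* = κF₁ + (1−κ)F₂, F₁(x) = P(Z + μ(U⁽¹⁾) ≤ x), F₂(x) = P(Z + μ(U⁽²⁾) ≤ x),
Z ~ N(0,1) independent of U⁽¹⁾ ~ Unif(0,κ), U⁽²⁾ ~ Unif(κ,1).
-/

open MeasureTheory ProbabilityTheory Filter Finset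

noncomputable section

/-- Mass of a label configuration: i.i.d. labels, `true` (minority) w.p. κ. -/
def labelMass (κ : ℝ) {n : ℕ} (l : Fin n → Bool) : ℝ :=
  ∏ i, (if l i then κ else 1 - κ)

/-- The uniform probability measure on the interval `(a, b)`. -/
def unifMeasure (a b : ℝ) : Measure ℝ :=
  (ENNReal.ofReal (b - a))⁻¹ • (volume.restrict (Set.Ioo a b))

/-- Conditional law of a latent position given the node's label:
uniform on `(0, κ)` for group 1 (`true`), uniform on `(κ, 1)` for group 2. -/
def latentLaw (κ : ℝ) (b : Bool) : Measure ℝ :=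
  if b then unifMeasure 0 κ else unifMeasure κ 1

/-- Conditional mass of an adjacency configuration given the latent positions:
independent Bernoulli edges with success probability `w (u i) (u j)`, i < j. -/
def graphonEdgeMass {n : ℕ} (w : ℝ → ℝ → ℝ) (u : Fin n → ℝ)
    (a : Fin n → Fin n → Bool) : ℝ :=
  ∏ p ∈ Finset.univ.filter (fun p : Fin n × Fin n => p.1 < p.2),
    (if a p.1 p.2 then w (u p.1) (u p.2) else 1 - w (u p.1) (u p.2))

/-- `(P, c, U, A)` is a labelled graphon model with graphon `w` and minority
proportion `κ`: labels are i.i.d. (minority w.p. κ), latent positions are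
conditionally uniform on `(0,κ)` resp. `(κ,1)` given the labels, and edges are
conditionally independent Bernoulli(`w (U i) (U j)`) given the latent positions.
The joint law is pinned down on a generating π-system. -/
structure IsLabelledGraphon {Ω : Type*} [MeasurableSpace Ω] (P : Measure Ω)
    (n : ℕ) (w : ℝ → ℝ → ℝ) (κ : ℝ)
    (c : Ω → Fin n → Bool) (U : Ω → Fin n → ℝ)
    (A : Ω → Fin n → Fin n → Bool) : Prop where
  isProb : IsProbabilityMeasure P
  symm : ∀ ω i j, A ω i j = A ω j i
  loopless : ∀ ω i, A ω i i = false
  law : ∀ (l : Fin n → Bool) (S : Fin n → Set ℝ), (∀ i, MeasurableSet (S i)) →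
    ∀ (a : Fin n → Fin n → Bool), (∀ i j, a i j = a j i) → (∀ i, a i i = false) →
    P {ω | c ω = l ∧ (∀ i, U ω i ∈ S i) ∧ A ω = a}
      = ENNReal.ofReal (labelMass κ l) *
        ∫⁻ u in Set.univ.pi S, ENNReal.ofReal (graphonEdgeMass w u a)
          ∂(Measure.pi fun i => latentLaw κ (l i))

/-- Degree of node `i`. -/
def degree {n : ℕ} (A : Fin n → Fin n → Bool) (i : Fin n) : ℕ :=
  ∑ j, (if A i j then 1 else 0)

/-- The CDF of `Z + μ(U)` where `Z ~ N(0,1)` is independent of `U ~ Unif(a,b)`. -/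
def mixCDF (μ : ℝ → ℝ) (a b x : ℝ) : ℝ :=
  (((gaussianReal 0 1).prod (unifMeasure a b)) {p : ℝ × ℝ | p.1 + μ p.2 ≤ x}).toReal

/-- Empirical distribution function of the normalized degrees. -/
def empCDF {n : ℕ} (A : Fin n → Fin n → Bool) (pn x : ℝ) : ℝ :=
  ((Finset.univ.filter (fun i : Fin n =>
      ((degree A i : ℝ) - n * pn) / Real.sqrt (n * pn * (1 - pn)) ≤ x)).card : ℝ) / n

/-- Uniform law on the unit interval. -/
def lam : Measure ℝ := volume.restrict (Set.Ioo (0:ℝ) 1)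

instance lam_prob : IsProbabilityMeasure lam := ⟨by simp [lam]⟩

lemma unif_finite {a b : ℝ} (h : a < b) : IsProbabilityMeasure (unifMeasure a b) := by
  constructor
  have h0 : ENNReal.ofReal (b - a) ≠ 0 := by
    rw [Ne, ENNReal.ofReal_eq_zero]; linarith
  simp [unifMeasure, ENNReal.inv_mul_cancel h0]

lemma latent_prob {κ : ℝ} (hκ0 : 0 < κ) (hκ : κ < 1) (b : Bool) :
    IsProbabilityMeasure (latentLaw κ b) := by
  cases b
  · simpa [latentLaw] using unif_finite hκ
  · simpa [latentLaw] using unif_finite hκ0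

lemma lam_mix {κ : ℝ} (hκ0 : 0 < κ) (hκ : κ < 1) (S : Set ℝ) (hS : MeasurableSet S) :
    ENNReal.ofReal κ * unifMeasure 0 κ S + ENNReal.ofReal (1 - κ) * unifMeasure κ 1 S = lam S := by
  have h0 : ENNReal.ofReal κ ≠ 0 := by
    rw [Ne, ENNReal.ofReal_eq_zero]; linarith
  have h1 : ENNReal.ofReal (1 - κ) ≠ 0 := by
    rw [Ne, ENNReal.ofReal_eq_zero]; linarith
  simp only [unifMeasure, Measure.smul_apply, smul_eq_mul, sub_zero]
  rw [← mul_assoc, ← mul_assoc, ENNReal.mul_inv_cancel h0 ENNReal.ofReal_ne_top,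
    ENNReal.mul_inv_cancel h1 ENNReal.ofReal_ne_top, one_mul, one_mul, lam]
  have e2 : volume.restrict (Set.Ioo κ 1) = volume.restrict (Set.Ico κ 1) :=
    Measure.restrict_congr_set Ioo_ae_eq_Ico
  rw [e2, ← Set.Ioo_union_Ico_eq_Ioo hκ0 hκ.le, Measure.restrict_union _ measurableSet_Ico]
  · rfl
  · rw [Set.disjoint_left]; intro x hx hx'; exact absurd hx.2 (not_lt.2 hx'.1)

lemma label_mix {κ : ℝ} (hκ0 : 0 < κ) (hκ : κ < 1) (n : ℕ) :
    ∑ l : Fin n → Bool, ENNReal.ofReal (labelMass κ l) •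
      Measure.pi (fun i => latentLaw κ (l i)) = Measure.pi (fun _ : Fin n => lam) := by
  haveI := fun b => latent_prob hκ0 hκ b
  symm
  apply Measure.pi_eq
  intro s hs
  simp only [Measure.coe_finset_sum, Finset.sum_apply, Measure.smul_apply, smul_eq_mul,
    Measure.pi_pi]
  have : ∀ l : Fin n → Bool, ENNReal.ofReal (labelMass κ l) *
      ∏ i, latentLaw κ (l i) (s i) =
      ∏ i, (ENNReal.ofReal (if l i then κ else 1 - κ) * latentLaw κ (l i) (s i)) := by
    intro l
    rw [labelMass, ENNReal.ofReal_prod_of_nonneg, Finset.prod_mul_distrib]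
    intro i _
    split_ifs <;> linarith
  simp_rw [this]
  have h2 := Finset.prod_univ_sum (fun _ : Fin n => (Finset.univ : Finset Bool))
    (fun i b => ENNReal.ofReal (if b then κ else 1 - κ) * latentLaw κ b (s i))
  rw [Fintype.piFinset_univ] at h2
  rw [← h2]
  refine Finset.prod_congr rfl fun i _ => ?_
  simpa [latentLaw] using lam_mix hκ0 hκ (s i) (hs i)

/-- Edges of the complete graph on `Fin n`. -/
abbrev Edg (n : ℕ) := {p : Fin n × Fin n // p.1 < p.2}

/-- adjacency matrix of an edge configuration -/
def toAdj {n : ℕ} (e : Edg n → Bool) (i j : Fin n) : Bool :=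
  if h : i < j then e ⟨(i, j), h⟩ else if h : j < i then e ⟨(j, i), h⟩ else false

lemma toAdj_symm {n : ℕ} (e : Edg n → Bool) (i j : Fin n) : toAdj e i j = toAdj e j i := by
  unfold toAdj
  rcases lt_trichotomy i j with h | h | h
  · simp [h, h.not_gt]
  · subst h; simp
  · simp [h, h.not_gt]

lemma toAdj_loop {n : ℕ} (e : Edg n → Bool) (i : Fin n) : toAdj e i i = false := by
  simp [toAdj]

lemma toAdj_restrict {n : ℕ} (a : Fin n → Fin n → Bool) (h1 : ∀ i j, a i j = a j i)
    (h2 : ∀ i, a i i = false) : toAdj (fun p : Edg n => a p.1.1 p.1.2) = a := by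
  funext i j
  unfold toAdj
  rcases lt_trichotomy i j with h | h | h
  · simp [h]
  · subst h; simp [h2]
  · simp [h, h.not_gt, h1 i j]

/-- mass of an edge configuration -/
def eMass (w : ℝ → ℝ → ℝ) {n : ℕ} (e : Edg n → Bool) : ENNReal :=
  ∫⁻ u, ENNReal.ofReal (graphonEdgeMass w u (toAdj e)) ∂(Measure.pi fun _ : Fin n => lam)

/-- law of the edge configuration -/
def Qm (w : ℝ → ℝ → ℝ) (n : ℕ) : Measure (Edg n → Bool) :=
  ∑ e, eMass w e • Measure.dirac e

lemma Qm_apply (w : ℝ → ℝ → ℝ) (n : ℕ) (B : Set (Edg n → Bool)) [DecidablePred (· ∈ B)] :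
    Qm w n B = ∑ e with e ∈ B, eMass w e := by
  classical
  simp only [Qm, Measure.coe_finset_sum, Finset.sum_apply, Measure.smul_apply, smul_eq_mul,
    Measure.dirac_apply, Set.indicator_apply, Pi.one_apply, mul_ite, mul_one, mul_zero,
    Finset.sum_filter]

lemma model_le {Ω : Type*} [MeasurableSpace Ω] {P : Measure Ω} {n : ℕ} {w : ℝ → ℝ → ℝ} {κ : ℝ}
    {c : Ω → Fin n → Bool} {U : Ω → Fin n → ℝ} {A : Ω → Fin n → Fin n → Bool}
    (hκ0 : 0 < κ) (hκ : κ < 1)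
    (h : IsLabelledGraphon P n w κ c U A) (B : Set (Fin n → Fin n → Bool)) :
    P {ω | A ω ∈ B} ≤ Qm w n {e | toAdj e ∈ B} := by
  classical
  have hsub : {ω | A ω ∈ B} ⊆ ⋃ e ∈ (Finset.univ.filter fun e : Edg n → Bool => toAdj e ∈ B),
      ⋃ l ∈ (Finset.univ : Finset (Fin n → Bool)),
      {ω | c ω = l ∧ (∀ i, U ω i ∈ (Set.univ : Set ℝ)) ∧ A ω = toAdj e} := by
    intro ω hω
    have hh := toAdj_restrict (A ω) (h.symm ω) (h.loopless ω)
    simp only [Set.mem_iUnion]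
    refine ⟨fun p => A ω p.1.1 p.1.2, ?_, c ω, Finset.mem_univ _, rfl, fun _ => Set.mem_univ _,
      hh.symm⟩
    simp only [Finset.mem_filter, Finset.mem_univ, true_and]
    rw [hh]; exact hω
  refine (measure_mono hsub).trans ((measure_biUnion_finset_le _ _).trans ?_)
  rw [Qm_apply]
  refine Finset.sum_le_sum fun e _ => (measure_biUnion_finset_le _ _).trans (le_of_eq ?_)
  rw [eMass, ← label_mix hκ0 hκ, lintegral_finset_sum_measure]
  refine Finset.sum_congr rfl fun l _ => ?_
  rw [h.law l (fun _ => Set.univ) (fun _ => MeasurableSet.univ) (toAdj e) (toAdj_symm e)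
    (toAdj_loop e), lintegral_smul_measure]
  simp

/-- A well-behaved graphon. -/
structure GW (w : ℝ → ℝ → ℝ) : Prop where
  symm : ∀ u v, w u v = w v u
  meas : Measurable (Function.uncurry w)
  nonneg : ∀ u v, 0 ≤ w u v
  le_one : ∀ u v, w u v ≤ 1

lemma edgeMass_eq {n : ℕ} (w : ℝ → ℝ → ℝ) (u : Fin n → ℝ) (e : Edg n → Bool) :
    graphonEdgeMass w u (toAdj e) =
      ∏ p : Edg n, (if e p then w (u p.1.1) (u p.1.2) else 1 - w (u p.1.1) (u p.1.2)) := by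
  unfold graphonEdgeMass
  rw [Finset.prod_subtype (p := fun p : Fin n × Fin n => p.1 < p.2)]
  · refine Finset.prod_congr rfl fun p _ => ?_
    simp [toAdj, p.2]
  · simp

lemma GW.meas2 {w : ℝ → ℝ → ℝ} (h : GW w) {α : Type*} [MeasurableSpace α] {f g : α → ℝ}
    (hf : Measurable f) (hg : Measurable g) : Measurable fun a => w (f a) (g a) :=
  h.meas.comp (hf.prodMk hg)

lemma edgeMass_meas {n : ℕ} {w : ℝ → ℝ → ℝ} (h : GW w) (e : Edg n → Bool) :
    Measurable fun u : Fin n → ℝ => graphonEdgeMass w u (toAdj e) := by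
  simp_rw [edgeMass_eq]
  refine Finset.measurable_prod _ fun p _ => ?_
  have := h.meas2 (measurable_pi_apply (X := fun _ : Fin n => ℝ) p.1.1) (measurable_pi_apply p.1.2)
  split_ifs
  · exact this
  · exact measurable_const.sub this

lemma edgeMass_nonneg {n : ℕ} {w : ℝ → ℝ → ℝ} (h : GW w) (u : Fin n → ℝ) (e : Edg n → Bool) :
    0 ≤ graphonEdgeMass w u (toAdj e) := by
  rw [edgeMass_eq]
  refine Finset.prod_nonneg fun p _ => ?_
  have := h.nonneg (u p.1.1) (u p.1.2)
  have := h.le_one (u p.1.1) (u p.1.2)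
  split_ifs <;> linarith

lemma edgeMass_le {n : ℕ} {w : ℝ → ℝ → ℝ} (h : GW w) (u : Fin n → ℝ) (e : Edg n → Bool) :
    graphonEdgeMass w u (toAdj e) ≤ 1 := by
  rw [edgeMass_eq]
  refine Finset.prod_le_one (fun p _ => ?_) fun p _ => ?_ <;>
  · have := h.nonneg (u p.1.1) (u p.1.2)
    have := h.le_one (u p.1.1) (u p.1.2)
    split_ifs <;> linarith

lemma edgeMass_int {n : ℕ} {w : ℝ → ℝ → ℝ} (h : GW w) (e : Edg n → Bool) :
    Integrable (fun u => graphonEdgeMass w u (toAdj e)) (Measure.pi fun _ : Fin n => lam) := by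
  refine Integrable.of_bound (edgeMass_meas h e).aestronglyMeasurable 1 (ae_of_all _ fun u => ?_)
  rw [Real.norm_of_nonneg (edgeMass_nonneg h u e)]
  exact edgeMass_le h u e

lemma eMass_eq {n : ℕ} {w : ℝ → ℝ → ℝ} (h : GW w) (e : Edg n → Bool) :
    eMass w e = ENNReal.ofReal (∫ u, graphonEdgeMass w u (toAdj e)
      ∂(Measure.pi fun _ : Fin n => lam)) := by
  rw [eMass, ofReal_integral_eq_lintegral_ofReal (edgeMass_int h e)
    (ae_of_all _ fun u => edgeMass_nonneg h u e)]

lemma integral_Qm {n : ℕ} {w : ℝ → ℝ → ℝ} (h : GW w) (f : (Edg n → Bool) → ℂ) :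
    ∫ e, f e ∂(Qm w n) =
      ∫ u, ∑ e, (graphonEdgeMass w u (toAdj e) : ℂ) * f e ∂(Measure.pi fun _ : Fin n => lam) := by
  rw [integral_finsetSum _ (fun e _ => ((edgeMass_int h e).ofReal).mul_const _), Qm,
    integral_finset_sum_measure]
  · refine Finset.sum_congr rfl fun e _ => ?_
    rw [integral_smul_measure, integral_dirac, eMass_eq h, ENNReal.toReal_ofReal
      (integral_nonneg fun u => edgeMass_nonneg h u e), integral_mul_const, integral_complex_ofReal]
    simp
  · intro e _
    refine Integrable.smul_measure ?_ (by rw [eMass_eq h]; exact ENNReal.ofReal_ne_top)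
    exact integrable_dirac (by simp)

lemma sum_edges {n : ℕ} (w : ℝ → ℝ → ℝ) (u : Fin n → ℝ) (g : Edg n → Bool → ℂ) :
    ∑ e : Edg n → Bool, (graphonEdgeMass w u (toAdj e) : ℂ) * ∏ p, g p (e p) =
      ∏ p : Edg n, ((w (u p.1.1) (u p.1.2) : ℂ) * g p true +
        (1 - (w (u p.1.1) (u p.1.2) : ℂ)) * g p false) := by
  have h2 := Finset.prod_univ_sum (fun _ : Edg n => (Finset.univ : Finset Bool))
    (fun p b => ((if b then w (u p.1.1) (u p.1.2) else 1 - w (u p.1.1) (u p.1.2) : ℝ) : ℂ) * g p b)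
  rw [Fintype.piFinset_univ] at h2
  simp only [Fintype.sum_bool, Finset.prod_mul_distrib] at h2
  simp only [edgeMass_eq]
  push_cast at h2 ⊢
  rw [← h2]

lemma Qm_prob {n : ℕ} {w : ℝ → ℝ → ℝ} (h : GW w) : IsProbabilityMeasure (Qm w n) := by
  have hfin : IsFiniteMeasure (Qm w n) := by
    constructor
    classical
    rw [Qm_apply]
    refine ENNReal.sum_lt_top.2 fun e _ => ?_
    rw [eMass_eq h]; exact ENNReal.ofReal_lt_top
  have h1 := integral_Qm (n := n) h (fun _ => 1)
  have h2 := fun u => sum_edges (n := n) w u (fun _ _ => 1)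
  simp only [Finset.prod_const_one] at h2
  simp_rw [h2] at h1
  simp only [mul_one, add_sub_cancel, Finset.prod_const_one, integral_const, probReal_univ,
    one_smul] at h1
  constructor
  have h3 : (Qm w n).real Set.univ = 1 := by
    simpa using h1
  rw [measureReal_def] at h3
  rw [← ENNReal.ofReal_toReal (measure_ne_top (Qm w n) Set.univ), h3]; simp

lemma peel {α : Type*} [LinearOrder α] (T : Finset α) (i : α) (hi : i ∉ T) (F : α → α → ℂ)
    (hF : ∀ a b, F a b = F b a) :
    ∏ a ∈ insert i T, ∏ b ∈ insert i T, (if a < b then F a b else 1) =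
      (∏ k ∈ T, F i k) * ∏ a ∈ T, ∏ b ∈ T, (if a < b then F a b else 1) := by
  rw [Finset.prod_insert hi, Finset.prod_insert hi]
  simp_rw [Finset.prod_insert hi]
  rw [Finset.prod_mul_distrib, if_neg (lt_irrefl i), one_mul, ← mul_assoc,
    ← Finset.prod_mul_distrib]
  congr 1
  refine Finset.prod_congr rfl fun k hk => ?_
  have hne : i ≠ k := fun h => hi (h ▸ hk)
  rcases lt_or_gt_of_ne hne with h | h
  · simp [h, h.not_gt]
  · simp [h, h.not_gt, hF k i]

lemma two_peel {n : ℕ} (i : Fin (n + 2)) (j' : Fin (n + 1)) (F : Fin (n + 2) → Fin (n + 2) → ℂ)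
    (hF : ∀ a b, F a b = F b a)
    (h1 : ∀ a b, a ≠ i → a ≠ i.succAbove j' → b ≠ i → b ≠ i.succAbove j' → F a b = 1) :
    ∏ p : Edg (n + 2), F p.1.1 p.1.2 = F i (i.succAbove j') *
      ∏ k : Fin n, (F i (i.succAbove (j'.succAbove k)) *
        F (i.succAbove j') (i.succAbove (j'.succAbove k))) := by
  set j := i.succAbove j' with hj
  have e0 : ∏ p : Edg (n + 2), F p.1.1 p.1.2 =
      ∏ a ∈ (Finset.univ : Finset (Fin (n+2))), ∏ b ∈ (Finset.univ : Finset (Fin (n+2))),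
        (if a < b then F a b else 1) := by
    rw [← Finset.prod_product', ← Finset.prod_filter, Finset.univ_product_univ]
    rw [Finset.prod_subtype (p := fun p : Fin (n+2) × Fin (n+2) => p.1 < p.2)]
    simp
  set T : Finset (Fin (n+2)) := Finset.univ.image fun k : Fin n => i.succAbove (j'.succAbove k)
    with hT
  have hiT : i ∉ insert j T := by
    simp [hT, hj, Fin.succAbove_ne]
  have hjT : j ∉ T := by
    simp [hT, hj, Fin.succAbove_ne]
  have huniv : (Finset.univ : Finset (Fin (n+2))) = insert i (insert j T) := by
    symm
    rw [Finset.eq_univ_iff_forall]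
    intro x
    rcases Fin.eq_self_or_eq_succAbove i x with rfl | ⟨y, rfl⟩
    · simp
    · rcases Fin.eq_self_or_eq_succAbove j' y with rfl | ⟨z, rfl⟩
      · simp [hj]
      · simp [hT]
  rw [e0, huniv, peel _ _ hiT _ hF, peel _ _ hjT _ hF, Finset.prod_insert hjT]
  have e1 : ∏ a ∈ T, ∏ b ∈ T, (if a < b then F a b else 1) = 1 := by
    refine Finset.prod_eq_one fun a ha => Finset.prod_eq_one fun b hb => ?_
    rw [h1 a b, ite_self]
    · rintro rfl; exact hiT (Finset.mem_insert_of_mem ha)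
    · rintro rfl; exact hjT ha
    · rintro rfl; exact hiT (Finset.mem_insert_of_mem hb)
    · rintro rfl; exact hjT hb
  have hinj : Set.InjOn (fun k : Fin n => i.succAbove (j'.succAbove k)) (Finset.univ : Finset (Fin n)) :=
    fun a _ b _ hab => Fin.succAbove_right_injective (Fin.succAbove_right_injective hab)
  rw [e1, mul_one, hT, Finset.prod_image hinj, Finset.prod_image hinj, Finset.prod_mul_distrib,
    mul_assoc]

/-- the angle attached to an edge -/
def ang {m : ℕ} (i j : Fin m) (s t : ℝ) (a b : Fin m) : ℝ :=
  (if a = i ∨ b = i then s else 0) + (if a = j ∨ b = j then t else 0)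

lemma ang_symm {m : ℕ} (i j : Fin m) (s t : ℝ) (a b : Fin m) :
    ang i j s t a b = ang i j s t b a := by
  simp only [ang, or_comm]

/-- exponential factor -/
def ex (t : ℝ) : ℂ := Complex.exp (t * Complex.I)

lemma ex_zero : ex 0 = 1 := by simp [ex]
lemma ex_add (s t : ℝ) : ex (s + t) = ex s * ex t := by
  simp [ex, add_mul, Complex.exp_add]

lemma ex_deg {n : ℕ} (i : Fin (n + 2)) (j' : Fin (n + 1)) (s t : ℝ) (e : Edg (n + 2) → Bool) :
    ex (s * degree (toAdj e) i + t * degree (toAdj e) (i.succAbove j')) =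
      ∏ p : Edg (n + 2), ex (ang i (i.succAbove j') s t p.1.1 p.1.2 * (if e p then 1 else 0)) := by
  have hji : i.succAbove j' ≠ i := Fin.succAbove_ne i j'
  have h := two_peel i j' (fun a b => ex (ang i (i.succAbove j') s t a b *
    (if toAdj e a b then 1 else 0))) (fun a b => by rw [ang_symm, toAdj_symm])
    (fun a b h1 h2 h3 h4 => by simp [ang, h1, h2, h3, h4, ex_zero])
  have e1 : ∀ p : Edg (n+2), toAdj e p.1.1 p.1.2 = e p := fun p => by simp [toAdj, p.2]
  simp only [e1] at h
  rw [h]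
  have hd : ∀ m, (degree (toAdj e) m : ℝ) = ∑ k, (if toAdj e m k then (1:ℝ) else 0) := by
    intro m; simp [degree]
  have hexs : ∀ (f : Fin n → ℝ), ex (∑ k, f k) = ∏ k, ex (f k) := by
    intro f
    simp [ex, Finset.sum_mul, Complex.exp_sum]
  rw [hd, hd, Fin.sum_univ_succAbove _ i, Fin.sum_univ_succAbove _ j', Fin.sum_univ_succAbove _ i,
    Fin.sum_univ_succAbove _ j', toAdj_loop, toAdj_loop, toAdj_symm e _ i]
  simp only [← ex_add]
  rw [← hexs, ← ex_add]
  congr 1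
  have a1 : ang i (i.succAbove j') s t i (i.succAbove j') = s + t := by simp [ang]
  have a2 : ∀ k, ang i (i.succAbove j') s t i (i.succAbove (j'.succAbove k)) = s := by
    intro k; simp [ang, hji.symm, Fin.succAbove_ne]
  have a3 : ∀ k, ang i (i.succAbove j') s t (i.succAbove j') (i.succAbove (j'.succAbove k)) = t := by
    intro k; simp [ang, hji, Fin.succAbove_ne]
  simp only [a1, a2, a3, Finset.sum_add_distrib, ← Finset.mul_sum]
  simp only [Bool.false_eq_true, if_false]
  ring

lemma pi_split {n : ℕ} (i : Fin (n + 2)) (j' : Fin (n + 1)) (f : ℝ × ℝ × (Fin n → ℝ) → ℂ) :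
    ∫ u, f (u i, u (i.succAbove j'), fun k => u (i.succAbove (j'.succAbove k)))
      ∂(Measure.pi fun _ : Fin (n + 2) => lam) =
    ∫ z, f z ∂(lam.prod (lam.prod (Measure.pi fun _ : Fin n => lam))) := by
  have m1 := measurePreserving_piFinSuccAbove (fun _ : Fin (n + 2) => lam) i
  have m2 := measurePreserving_piFinSuccAbove (fun _ : Fin (n + 1) => lam) j'
  have m3 := (MeasurePreserving.id lam).prod m2
  have m4 := m1.integral_comp' (g := fun z => f (z.1, z.2 j', fun k => z.2 (j'.succAbove k)))
  have m5 := m3.integral_comp (((MeasurableEquiv.refl ℝ).prodCongr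
    (MeasurableEquiv.piFinSuccAbove (fun _ => ℝ) j')).measurableEmbedding) f
  refine Eq.trans ?_ (m4.trans (Eq.trans ?_ m5))
  · rfl
  · rfl

/-- one-edge factor -/
def fac (w θ : ℝ) : ℂ := 1 + w * (ex θ - 1)

lemma norm_ex (θ : ℝ) : ‖ex θ‖ = 1 := by
  rw [ex]; exact Complex.norm_exp_ofReal_mul_I θ

lemma norm_fac {w θ : ℝ} (h0 : 0 ≤ w) (h1 : w ≤ 1) : ‖fac w θ‖ ≤ 1 := by
  have : fac w θ = ((1 - w : ℝ) : ℂ) + (w : ℂ) * ex θ := by simp [fac]; ring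
  rw [this]
  refine (norm_add_le _ _).trans ?_
  rw [norm_mul, norm_ex, Complex.norm_real, Complex.norm_real, Real.norm_of_nonneg h0,
    Real.norm_of_nonneg (by linarith)]
  linarith

/-- joint characteristic function of two degrees -/
def CF (w : ℝ → ℝ → ℝ) (n : ℕ) (s t : ℝ) : ℂ :=
  ∫ z, fac (w z.1 z.2) (s + t) * (∫ v, fac (w z.1 v) s * fac (w z.2 v) t ∂lam) ^ n ∂(lam.prod lam)

lemma charDeg {n : ℕ} {w : ℝ → ℝ → ℝ} (h : GW w) (i : Fin (n + 2)) (j' : Fin (n + 1)) (s t : ℝ) :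
    ∫ e, ex (s * degree (toAdj e) i + t * degree (toAdj e) (i.succAbove j')) ∂(Qm w (n + 2)) =
      CF w n s t := by
  have hji : i.succAbove j' ≠ i := Fin.succAbove_ne i j'
  rw [integral_Qm h]
  have a1 : ang i (i.succAbove j') s t i (i.succAbove j') = s + t := by simp [ang]
  have a2 : ∀ k, ang i (i.succAbove j') s t i (i.succAbove (j'.succAbove k)) = s := by
    intro k; simp [ang, hji.symm, Fin.succAbove_ne]
  have a3 : ∀ k, ang i (i.succAbove j') s t (i.succAbove j') (i.succAbove (j'.succAbove k)) = t := by
    intro k; simp [ang, hji, Fin.succAbove_ne]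
  have key : ∀ u : Fin (n + 2) → ℝ, ∑ e, (graphonEdgeMass w u (toAdj e) : ℂ) *
      ex (s * degree (toAdj e) i + t * degree (toAdj e) (i.succAbove j')) =
      fac (w (u i) (u (i.succAbove j'))) (s + t) * ∏ k : Fin n,
        (fac (w (u i) (u (i.succAbove (j'.succAbove k)))) s *
         fac (w (u (i.succAbove j')) (u (i.succAbove (j'.succAbove k)))) t) := by
    intro u
    simp only [ex_deg]
    rw [sum_edges w u (fun p b => ex (ang i (i.succAbove j') s t p.1.1 p.1.2 *
      (if b then 1 else 0)))]
    have := two_peel i j' (fun a b => fac (w (u a) (u b)) (ang i (i.succAbove j') s t a b))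
      (fun a b => by rw [ang_symm, h.symm])
      (fun a b h1 h2 h3 h4 => by simp [ang, h1, h2, h3, h4, ex_zero, fac])
    simp only [a1, a2, a3] at this
    rw [← this]
    refine Finset.prod_congr rfl fun p _ => ?_
    simp [fac, ex_zero]; ring
  simp only [key]
  rw [pi_split i j' (fun z => fac (w z.1 z.2.1) (s + t) * ∏ k : Fin n,
        (fac (w z.1 (z.2.2 k)) s * fac (w z.2.1 (z.2.2 k)) t))]
  have hm : ∀ {α : Type} [MeasurableSpace α] {f g : α → ℝ} (θ : ℝ), Measurable f → Measurable g →
      Measurable fun a => fac (w (f a) (g a)) θ := by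
    intro α _ f g θ hf hg
    have := Complex.measurable_ofReal.comp (h.meas2 hf hg)
    exact measurable_const.add (this.mul_const _)
  have hIntg : Integrable (fun z : (ℝ × ℝ) × (Fin n → ℝ) => fac (w z.1.1 z.1.2) (s + t) * ∏ k : Fin n,
        (fac (w z.1.1 (z.2 k)) s * fac (w z.1.2 (z.2 k)) t))
        ((lam.prod lam).prod (Measure.pi fun _ : Fin n => lam)) := by
    refine Integrable.of_bound (C := 1) (Measurable.aestronglyMeasurable ?_) (ae_of_all _ fun z => ?_)
    · refine (hm _ (by fun_prop) (by fun_prop)).mul (Finset.measurable_fun_prod _ fun k _ => ?_)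
      exact (hm _ (by fun_prop) (by fun_prop)).mul (hm _ (by fun_prop) (by fun_prop))
    · rw [norm_mul, norm_prod]
      refine mul_le_one₀ (norm_fac (h.nonneg _ _) (h.le_one _ _)) (by positivity)
        (Finset.prod_le_one (fun _ _ => norm_nonneg _) fun k _ => ?_)
      rw [norm_mul]
      exact mul_le_one₀ (norm_fac (h.nonneg _ _) (h.le_one _ _)) (norm_nonneg _)
        (norm_fac (h.nonneg _ _) (h.le_one _ _))
  have hassoc := (measurePreserving_prodAssoc lam lam (Measure.pi fun _ : Fin n => lam)).integral_comp'
    (g := fun z : ℝ × ℝ × (Fin n → ℝ) => fac (w z.1 z.2.1) (s + t) * ∏ k : Fin n,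
        (fac (w z.1 (z.2.2 k)) s * fac (w z.2.1 (z.2.2 k)) t))
  rw [← hassoc]
  refine (integral_prod _ hIntg).trans ?_
  rw [CF]
  refine integral_congr_ae (ae_of_all _ fun z => ?_)
  simp only
  rw [integral_const_mul, integral_fintype_prod_eq_prod (𝕜 := ℂ)
    (f := fun _ v => fac (w z.1 v) s * fac (w z.2 v) t)]
  simp

/-- Assumptions after extending the graphon to the whole plane. -/
structure Hyp (w : ℕ → ℝ → ℝ → ℝ) (p : ℕ → ℝ) (μ : ℝ → ℝ) (ε C : ℝ) : Prop where
  gw : ∀ n, GW (w n)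
  eps : 0 < ε
  hp : ∀ n, p n ∈ Set.Ioo ε (1 - ε)
  conc : ∀ n : ℕ, 1 ≤ n → ∀ u v, |w n u v - p n| ≤ C / Real.sqrt n
  mean : ∀ u, Tendsto (fun n : ℕ =>
    Real.sqrt (n / (p n * (1 - p n))) * ∫ v, (w n u v - p n) ∂lam) atTop (nhds (μ u))

/-- standard deviation normalisation -/
def sg (p : ℕ → ℝ) (N : ℕ) : ℝ := Real.sqrt (N * p N * (1 - p N))

/-- centered Bernoulli characteristic function -/
def aa (p α : ℝ) : ℂ := ex (-(α * p)) * fac p α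
/-- derivative in the edge probability -/
def bb (p α : ℝ) : ℂ := ex (-(α * p)) * (ex α - 1)

lemma ex_fac (p α w : ℝ) : ex (-(α * p)) * fac w α = aa p α + ((w - p : ℝ) : ℂ) * bb p α := by
  simp only [aa, bb, fac]; push_cast; ring

lemma ex_taylor2 {θ : ℝ} (h : |θ| ≤ 1) : ‖ex θ - 1 - θ * Complex.I + θ ^ 2 / 2‖ ≤ |θ| ^ 3 := by
  have hn : ‖(θ * Complex.I : ℂ)‖ = |θ| := by simp
  have := Complex.exp_bound (x := θ * Complex.I) (by rw [hn]; exact h) (n := 3) (by norm_num)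
  rw [hn] at this
  have e : ex θ - 1 - θ * Complex.I + θ ^ 2 / 2 = Complex.exp (θ * Complex.I) -
      ∑ m ∈ Finset.range 3, (θ * Complex.I : ℂ) ^ m / m.factorial := by
    simp [ex, Finset.sum_range_succ, Nat.factorial, mul_pow]
    ring
  rw [e]
  refine this.trans ?_
  have h3 : (0:ℝ) ≤ |θ| ^ 3 := by positivity
  norm_num [Nat.factorial]
  nlinarith

lemma ex_taylor1 {θ : ℝ} (h : |θ| ≤ 1) : ‖ex θ - 1 - θ * Complex.I‖ ≤ |θ| ^ 2 := by
  have hn : ‖(θ * Complex.I : ℂ)‖ = |θ| := by simp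
  have := Complex.norm_exp_sub_one_sub_id_le (x := θ * Complex.I) (by rw [hn]; exact h)
  rw [hn] at this
  exact this

lemma aa_bound {p α : ℝ} (h0 : 0 ≤ p) (h1 : p ≤ 1) (hα : |α| ≤ 1) :
    ‖aa p α - 1 + ((α ^ 2 * (p * (1 - p)) / 2 : ℝ) : ℂ)‖ ≤ |α| ^ 3 := by
  have e1 : ex (-(α * p)) * ex α = ex (α * (1 - p)) := by
    rw [← ex_add]; congr 1; ring
  have e : aa p α - 1 + ((α ^ 2 * (p * (1 - p)) / 2 : ℝ) : ℂ) =
      (p : ℂ) * (ex (α * (1 - p)) - 1 - ((α * (1 - p) : ℝ) : ℂ) * Complex.I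
        + ((α * (1 - p) : ℝ) : ℂ) ^ 2 / 2)
      + ((1 - p : ℝ) : ℂ) * (ex (-(α * p)) - 1 - ((-(α * p) : ℝ) : ℂ) * Complex.I
        + ((-(α * p) : ℝ) : ℂ) ^ 2 / 2) := by
    rw [← e1]; simp only [aa, fac]; push_cast; ring
  have b1 : |α * (1 - p)| ≤ |α| := by
    rw [abs_mul, abs_of_nonneg (by linarith : 0 ≤ 1 - p)]
    nlinarith [abs_nonneg α]
  have b2 : |-(α * p)| ≤ |α| := by
    rw [abs_neg, abs_mul, abs_of_nonneg h0]
    nlinarith [abs_nonneg α]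
  rw [e]
  refine (norm_add_le _ _).trans ?_
  rw [norm_mul, norm_mul, Complex.norm_real, Complex.norm_real, Real.norm_of_nonneg h0,
    Real.norm_of_nonneg (by linarith)]
  have c1 := (ex_taylor2 (b1.trans hα)).trans (pow_le_pow_left₀ (abs_nonneg _) b1 3)
  have c2 := (ex_taylor2 (b2.trans hα)).trans (pow_le_pow_left₀ (abs_nonneg _) b2 3)
  nlinarith

lemma bb_bound {p α : ℝ} (h0 : 0 ≤ p) (h1 : p ≤ 1) (hα : |α| ≤ 1) :
    ‖bb p α - α * Complex.I‖ ≤ 2 * |α| ^ 2 := by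
  have e1 : ex (-(α * p)) * ex α = ex (α * (1 - p)) := by
    rw [← ex_add]; congr 1; ring
  have e : bb p α - α * Complex.I =
      (ex (α * (1 - p)) - 1 - ((α * (1 - p) : ℝ) : ℂ) * Complex.I)
      - (ex (-(α * p)) - 1 - ((-(α * p) : ℝ) : ℂ) * Complex.I) := by
    rw [← e1]; simp only [bb]; push_cast; ring
  have b1 : |α * (1 - p)| ≤ |α| := by
    rw [abs_mul, abs_of_nonneg (by linarith : 0 ≤ 1 - p)]
    nlinarith [abs_nonneg α]
  have b2 : |-(α * p)| ≤ |α| := by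
    rw [abs_neg, abs_mul, abs_of_nonneg h0]
    nlinarith [abs_nonneg α]
  rw [e]
  refine (norm_sub_le _ _).trans ?_
  have c1 := (ex_taylor1 (b1.trans hα)).trans (pow_le_pow_left₀ (abs_nonneg _) b1 2)
  have c2 := (ex_taylor1 (b2.trans hα)).trans (pow_le_pow_left₀ (abs_nonneg _) b2 2)
  linarith

section
variable {w : ℕ → ℝ → ℝ → ℝ} {p : ℕ → ℝ} {μ : ℝ → ℝ} {ε C : ℝ}

lemma Hyp.p0 (h : Hyp w p μ ε C) (n : ℕ) : 0 < p n := h.eps.trans (h.hp n).1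
lemma Hyp.p1 (h : Hyp w p μ ε C) (n : ℕ) : p n < 1 := by
  have := (h.hp n).2; have := h.eps; linarith
lemma Hyp.q0 (h : Hyp w p μ ε C) (n : ℕ) : ε ^ 2 ≤ p n * (1 - p n) := by
  have := (h.hp n).2; have := (h.hp n).1; have := h.eps; nlinarith
lemma Hyp.qpos (h : Hyp w p μ ε C) (n : ℕ) : 0 < p n * (1 - p n) :=
  lt_of_lt_of_le (pow_pos h.eps 2) (h.q0 n)

lemma Hyp.sg_sq (h : Hyp w p μ ε C) (n : ℕ) : sg p n ^ 2 = n * (p n * (1 - p n)) := by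
  have := h.qpos n
  rw [sg, Real.sq_sqrt, mul_assoc]
  rw [mul_assoc]; positivity

lemma Hyp.sg_pos (h : Hyp w p μ ε C) {n : ℕ} (hn : 1 ≤ n) : 0 < sg p n := by
  have := h.qpos n
  have hn : (0:ℝ) < n := by exact_mod_cast hn
  apply Real.sqrt_pos.2
  rw [mul_assoc]; positivity

lemma Hyp.sg_top (h : Hyp w p μ ε C) : Tendsto (sg p) atTop atTop := by
  have : Tendsto (fun n : ℕ => Real.sqrt (n * ε ^ 2)) atTop atTop := by
    refine Real.tendsto_sqrt_atTop.comp ?_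
    exact tendsto_natCast_atTop_atTop.atTop_mul_const (pow_pos h.eps 2)
  refine tendsto_atTop_mono (fun n => ?_) this
  apply Real.sqrt_le_sqrt
  rw [mul_assoc]
  exact mul_le_mul_of_nonneg_left (h.q0 n) (by positivity)

lemma Hyp.div_sg (h : Hyp w p μ ε C) (s : ℝ) : Tendsto (fun n => s / sg p n) atTop (nhds 0) :=
  h.sg_top.const_div_atTop s

lemma Hyp.aa_lim (h : Hyp w p μ ε C) (s : ℝ) :
    Tendsto (fun n : ℕ => (n : ℂ) * (aa (p n) (s / sg p n) - 1)) atTop (nhds (-(s ^ 2 / 2 : ℝ) : ℂ)) := by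
  have hz := h.div_sg s
  have hsmall : ∀ᶠ n in atTop, |s / sg p n| ≤ 1 := by
    have := hz.abs
    rw [abs_zero] at this
    filter_upwards [this.eventually_lt_const one_pos] with n hn using hn.le
  rw [tendsto_iff_norm_sub_tendsto_zero]
  have hb : Tendsto (fun n => s ^ 2 / ε ^ 2 * |s / sg p n|) atTop (nhds 0) := by
    simpa using hz.abs.const_mul (s ^ 2 / ε ^ 2)
  refine squeeze_zero' (Eventually.of_forall fun n => norm_nonneg _) ?_ hb
  filter_upwards [hsmall, eventually_ge_atTop 1] with n hn hn1
  have hnpos : (0:ℝ) < n := by exact_mod_cast hn1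
  have hs := h.sg_pos hn1
  have hsq := h.sg_sq n
  have key := aa_bound (h.p0 n).le (h.p1 n).le hn
  have hα : (n : ℝ) * (s / sg p n) ^ 2 * (p n * (1 - p n)) = s ^ 2 := by
    rw [div_pow, hsq]
    have := (h.qpos n).ne'
    generalize p n * (1 - p n) = q at this
    field_simp
  have e : (n : ℂ) * (aa (p n) (s / sg p n) - 1) - -((s ^ 2 / 2 : ℝ) : ℂ) =
      (n : ℂ) * (aa (p n) (s / sg p n) - 1 +
        (((s / sg p n) ^ 2 * (p n * (1 - p n)) / 2 : ℝ) : ℂ)) := by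
    have : ((n : ℂ)) * (((s / sg p n) ^ 2 * (p n * (1 - p n)) / 2 : ℝ) : ℂ) =
      ((s ^ 2 / 2 : ℝ) : ℂ) := by
      rw [← hα]; push_cast; ring
    rw [mul_add, this]; ring
  rw [e, norm_mul, Complex.norm_natCast]
  refine (mul_le_mul_of_nonneg_left key hnpos.le).trans ?_
  have hn2 : (n : ℝ) * (s / sg p n) ^ 2 ≤ s ^ 2 / ε ^ 2 := by
    rw [le_div_iff₀ (pow_pos h.eps 2), ← hα]
    exact mul_le_mul_of_nonneg_left (h.q0 n) (by positivity)
  calc (n : ℝ) * |s / sg p n| ^ 3 = (n * |s / sg p n| ^ 2) * |s / sg p n| := by ring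
    _ ≤ _ := by
      rw [sq_abs]
      exact mul_le_mul_of_nonneg_right hn2 (abs_nonneg _)

lemma Hyp.bb_lim (h : Hyp w p μ ε C) (s : ℝ) :
    Tendsto (fun n : ℕ => (sg p n : ℂ) * bb (p n) (s / sg p n)) atTop (nhds (s * Complex.I)) := by
  have hz := h.div_sg s
  have hsmall : ∀ᶠ n in atTop, |s / sg p n| ≤ 1 := by
    have := hz.abs
    rw [abs_zero] at this
    filter_upwards [this.eventually_lt_const one_pos] with n hn using hn.le
  rw [tendsto_iff_norm_sub_tendsto_zero]
  have hb : Tendsto (fun n => 2 * |s| * |s / sg p n|) atTop (nhds 0) := by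
    simpa using hz.abs.const_mul (2 * |s|)
  refine squeeze_zero' (Eventually.of_forall fun n => norm_nonneg _) ?_ hb
  filter_upwards [hsmall, eventually_ge_atTop 1] with n hn hn1
  have hs := h.sg_pos hn1
  have key := bb_bound (h.p0 n).le (h.p1 n).le hn
  have hα : sg p n * (s / sg p n) = s := by field_simp
  have e : (sg p n : ℂ) * bb (p n) (s / sg p n) - s * Complex.I =
      (sg p n : ℂ) * (bb (p n) (s / sg p n) - ((s / sg p n : ℝ) : ℂ) * Complex.I) := by
    rw [mul_sub, ← mul_assoc, ← Complex.ofReal_mul, hα]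
  rw [e, norm_mul, Complex.norm_real, Real.norm_of_nonneg hs.le]
  refine (mul_le_mul_of_nonneg_left key hs.le).trans (le_of_eq ?_)
  have : sg p n * |s / sg p n| = |s| := by
    rw [abs_div, abs_of_pos hs]; field_simp
  rw [← this]; ring

lemma zero_of_top_mul {f : ℕ → ℂ} {g : ℕ → ℝ} {L : ℂ} (hg : Tendsto g atTop atTop)
    (h : Tendsto (fun n => (g n : ℂ) * f n) atTop (nhds L)) : Tendsto f atTop (nhds 0) := by
  have h1 : Tendsto (fun n => ((g n)⁻¹ : ℝ)) atTop (nhds 0) := hg.inv_tendsto_atTop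
  have h2 := ((Complex.continuous_ofReal.tendsto 0).comp h1).mul h
  simp only [Complex.ofReal_zero, zero_mul] at h2
  refine h2.congr' ?_
  filter_upwards [hg.eventually_gt_atTop 0] with n hn
  have : (g n : ℂ) ≠ 0 := by exact_mod_cast hn.ne'
  simp [this]

lemma Hyp.aa_one (h : Hyp w p μ ε C) (s : ℝ) :
    Tendsto (fun n : ℕ => aa (p n) (s / sg p n)) atTop (nhds 1) := by
  have := zero_of_top_mul (g := fun n : ℕ => (n : ℝ)) tendsto_natCast_atTop_atTop
    (by simpa using h.aa_lim s)
  simpa using this.add_const 1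

lemma GW.int {w : ℝ → ℝ → ℝ} (h : GW w) (u : ℝ) : Integrable (w u) lam := by
  refine Integrable.of_bound (h.meas2 measurable_const measurable_id).aestronglyMeasurable 1
    (ae_of_all _ fun v => ?_)
  change ‖w u v‖ ≤ 1
  rw [Real.norm_of_nonneg (h.nonneg _ _)]; exact h.le_one _ _

lemma GW.int2 {w : ℝ → ℝ → ℝ} (h : GW w) (u u' p : ℝ) :
    Integrable (fun v => (w u v - p) * (w u' v - p)) lam := by
  have m1 : Measurable (w u) := h.meas2 measurable_const measurable_id
  have m2 : Measurable (w u') := h.meas2 measurable_const measurable_id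
  refine Integrable.of_bound (C := (1 + |p|) * (1 + |p|))
    ((m1.sub_const _).mul (m2.sub_const _)).aestronglyMeasurable
    (ae_of_all _ fun v => ?_)
  have hb : ∀ u, |w u v - p| ≤ 1 + |p| := fun u => (abs_sub _ _).trans (by
    rw [abs_of_nonneg (h.nonneg _ _)]; linarith [h.le_one u v])
  rw [norm_mul]
  exact mul_le_mul (hb _) (hb _) (abs_nonneg _) (by positivity)

/-- centered one-node factor -/
def psi (w : ℝ → ℝ → ℝ) (p x y α β : ℝ) : ℂ :=
  ∫ v, (ex (-(α * p)) * fac (w x v) α) * (ex (-(β * p)) * fac (w y v) β) ∂lam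

lemma psi_eq {w : ℝ → ℝ → ℝ} (h : GW w) (p x y α β : ℝ) :
    psi w p x y α β = aa p α * aa p β + aa p β * bb p α * ((∫ v, (w x v - p) ∂lam : ℝ) : ℂ)
      + aa p α * bb p β * ((∫ v, (w y v - p) ∂lam : ℝ) : ℂ)
      + bb p α * bb p β * ((∫ v, (w x v - p) * (w y v - p) ∂lam : ℝ) : ℂ) := by
  have i1 : Integrable (fun v => ((w x v - p : ℝ) : ℂ)) lam :=
    ((h.int x).sub (integrable_const p)).ofReal
  have i2 : Integrable (fun v => ((w y v - p : ℝ) : ℂ)) lam :=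
    ((h.int y).sub (integrable_const p)).ofReal
  have i3 : Integrable (fun v => (((w x v - p) * (w y v - p) : ℝ) : ℂ)) lam :=
    (h.int2 x y p).ofReal
  unfold psi
  simp only [ex_fac]
  have : ∀ v, (aa p α + ((w x v - p : ℝ) : ℂ) * bb p α) * (aa p β + ((w y v - p : ℝ) : ℂ) * bb p β)
      = aa p α * aa p β + aa p β * bb p α * ((w x v - p : ℝ) : ℂ)
      + aa p α * bb p β * ((w y v - p : ℝ) : ℂ)
      + bb p α * bb p β * (((w x v - p) * (w y v - p) : ℝ) : ℂ) := by
    intro v; push_cast; ring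
  simp only [this]
  have j1 : Integrable (fun v => aa p α * aa p β + aa p β * bb p α * ((w x v - p : ℝ) : ℂ)) lam :=
    (integrable_const _).add (i1.const_mul _)
  have j2 : Integrable (fun v => aa p α * aa p β + aa p β * bb p α * ((w x v - p : ℝ) : ℂ)
      + aa p α * bb p β * ((w y v - p : ℝ) : ℂ)) lam := j1.add (i2.const_mul _)
  rw [integral_add j2 (i3.const_mul _), integral_add j1 (i2.const_mul _),
      integral_add (integrable_const _) (i1.const_mul _), integral_const, integral_const_mul,
      integral_const_mul,
      integral_const_mul, integral_complex_ofReal, integral_complex_ofReal, integral_complex_ofReal]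
  simp

lemma Hyp.mean' (h : Hyp w p μ ε C) (u : ℝ) : Tendsto (fun n : ℕ =>
    ((n / sg p n * ∫ v, (w n u v - p n) ∂lam : ℝ) : ℂ)) atTop (nhds (μ u : ℂ)) := by
  refine ((Complex.continuous_ofReal.tendsto _).comp (h.mean u)).congr' ?_
  filter_upwards [eventually_ge_atTop 1] with n hn1
  simp only [Function.comp]
  congr 2
  have hnpos : (0:ℝ) < n := by exact_mod_cast hn1
  have hs := h.sg_pos hn1
  have hsq := h.sg_sq n
  rw [Real.sqrt_eq_iff_mul_self_eq_of_pos (by positivity)]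
  have := (h.qpos n).ne'
  have e : (n : ℝ) / sg p n * (n / sg p n) = n ^ 2 / (sg p n) ^ 2 := by ring
  rw [e, hsq]
  field_simp

lemma Hyp.cov_lim (h : Hyp w p μ ε C) (x y : ℝ) : Tendsto (fun n : ℕ =>
    ((n / sg p n ^ 2 * ∫ v, (w n x v - p n) * (w n y v - p n) ∂lam : ℝ) : ℂ)) atTop (nhds 0) := by
  rw [← Complex.ofReal_zero]
  refine (Complex.continuous_ofReal.tendsto _).comp ?_
  have hb : Tendsto (fun n : ℕ => (1 / ε ^ 2 * C ^ 2) / (n : ℝ)) atTop (nhds 0) :=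
    tendsto_natCast_atTop_atTop.const_div_atTop _
  refine squeeze_zero_norm' ?_ hb
  filter_upwards [eventually_ge_atTop 1] with n hn1
  have hnpos : (0:ℝ) < n := by exact_mod_cast hn1
  have h1 : (n : ℝ) / sg p n ^ 2 = 1 / (p n * (1 - p n)) := by
    rw [h.sg_sq n]; have := (h.qpos n).ne'; field_simp
  have h2 : ‖∫ v, (w n x v - p n) * (w n y v - p n) ∂lam‖ ≤ C ^ 2 / n := by
    have := norm_integral_le_of_norm_le_const (μ := lam)
      (f := fun v => (w n x v - p n) * (w n y v - p n)) (C := C ^ 2 / n) (ae_of_all _ fun v => ?_)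
    · simpa using this
    · rw [norm_mul]
      have hx := h.conc n hn1 x v
      have hy := h.conc n hn1 y v
      have e : C ^ 2 / n = (C / Real.sqrt n) * (C / Real.sqrt n) := by
        rw [div_mul_div_comm, Real.mul_self_sqrt hnpos.le]; ring
      rw [e]
      exact mul_le_mul hx hy (abs_nonneg _) ((abs_nonneg _).trans hx)
  rw [h1, norm_mul, Real.norm_of_nonneg (one_div_nonneg.2 (h.qpos n).le)]
  have h3 : 1 / (p n * (1 - p n)) ≤ 1 / ε ^ 2 :=
    one_div_le_one_div_of_le (pow_pos h.eps 2) (h.q0 n)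
  calc _ ≤ 1 / ε ^ 2 * (C ^ 2 / n) := mul_le_mul h3 h2 (norm_nonneg _) (by positivity)
    _ = _ := by ring

lemma Hyp.psi_lim (h : Hyp w p μ ε C) (x y s t : ℝ) : Tendsto (fun n : ℕ =>
    (n : ℂ) * (psi (w n) (p n) x y (s / sg p n) (t / sg p n) - 1)) atTop
    (nhds (-(s ^ 2 / 2 : ℝ) + -(t ^ 2 / 2 : ℝ) + s * Complex.I * μ x + t * Complex.I * μ y)) := by
  have L := ((((h.aa_lim s).mul (h.aa_one t)).add (h.aa_lim t)).add
    (((h.aa_one t).mul (h.bb_lim s)).mul (h.mean' x))).add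
    (((h.aa_one s).mul (h.bb_lim t)).mul (h.mean' y)) |>.add
    (((h.bb_lim s).mul (h.bb_lim t)).mul (h.cov_lim x y))
  simp only [mul_one, one_mul, mul_zero, add_zero] at L
  refine L.congr' ?_
  filter_upwards [eventually_ge_atTop 1] with n hn1
  have hs : (sg p n : ℂ) ≠ 0 := by exact_mod_cast (h.sg_pos hn1).ne'
  rw [psi_eq (h.gw n)]
  generalize (∫ v, (w n x v - p n) ∂lam) = D1
  generalize (∫ v, (w n y v - p n) ∂lam) = D2
  generalize (∫ v, (w n x v - p n) * (w n y v - p n) ∂lam) = D3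
  push_cast
  field_simp
  ring

lemma Hyp.psi_pow (h : Hyp w p μ ε C) (x y s t : ℝ) : Tendsto (fun n : ℕ =>
    psi (w (n + 2)) (p (n + 2)) x y (s / sg p (n + 2)) (t / sg p (n + 2)) ^ n) atTop
    (nhds (Complex.exp (-(s ^ 2 / 2 : ℝ) + -(t ^ 2 / 2 : ℝ) + s * Complex.I * μ x
      + t * Complex.I * μ y))) := by
  have h0 := h.psi_lim x y s t
  have h1 := zero_of_top_mul (g := fun n : ℕ => (n : ℝ)) tendsto_natCast_atTop_atTop
    (by simpa using h0)
  have h0' := (tendsto_add_atTop_iff_nat 2).2 h0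
  have h1' := ((tendsto_add_atTop_iff_nat 2).2 h1).const_mul 2
  have h2 := h0'.sub h1'
  rw [mul_zero, sub_zero] at h2
  have h3 := Complex.tendsto_one_add_pow_exp_of_tendsto
    (g := fun n => psi (w (n + 2)) (p (n + 2)) x y (s / sg p (n + 2)) (t / sg p (n + 2)) - 1)
    (h2.congr fun n => by push_cast; ring)
  simpa using h3

/-- limiting law -/
def limLaw (μ : ℝ → ℝ) : Measure ℝ := ((gaussianReal 0 1).prod lam).map fun z => z.1 + μ z.2

lemma charFun_limLaw (hμ : Measurable μ) (s : ℝ) :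
    charFun (limLaw μ) s = Complex.exp (-(s ^ 2 / 2 : ℝ)) * ∫ x, ex (s * μ x) ∂lam := by
  rw [charFun_apply_real, limLaw, integral_map (by fun_prop) (by fun_prop)]
  have : ∀ z : ℝ × ℝ, Complex.exp (s * ((z.1 + μ z.2 : ℝ) : ℂ) * Complex.I) =
      Complex.exp (s * z.1 * Complex.I) * ex (s * μ z.2) := by
    intro z
    rw [ex, ← Complex.exp_add]; congr 1; push_cast; ring
  simp only [this]
  rw [integral_prod_mul (fun a : ℝ => Complex.exp (s * a * Complex.I)) (fun b => ex (s * μ b)),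
    ← charFun_apply_real, charFun_gaussianReal]
  simp

lemma psi_fac (w : ℝ → ℝ → ℝ) (p x y α β : ℝ) :
    psi w p x y α β = ex (-(α * p)) * ex (-(β * p)) * ∫ v, fac (w x v) α * fac (w y v) β ∂lam := by
  rw [psi, ← integral_const_mul]
  refine integral_congr_ae (ae_of_all _ fun v => ?_)
  simp only; ring

lemma ex_pow (θ : ℝ) (n : ℕ) : ex θ ^ n = ex (n * θ) := by
  rw [ex, ex, ← Complex.exp_nat_mul]; congr 1; push_cast; ring

lemma Hyp.mu_meas (h : Hyp w p μ ε C) : Measurable μ := by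
  refine measurable_of_tendsto_metrizable (fun n => ?_) (tendsto_pi_nhds.2 h.mean)
  refine Measurable.const_mul ?_ _
  have : StronglyMeasurable (Function.uncurry fun u v => w n u v - p n) :=
    ((h.gw n).meas.sub_const _).stronglyMeasurable
  exact this.integral_prod_right.measurable

lemma CF_meas {w : ℝ → ℝ → ℝ} (h : GW w) (n : ℕ) (s t : ℝ) :
    StronglyMeasurable fun z : ℝ × ℝ =>
      fac (w z.1 z.2) (s + t) * (∫ v, fac (w z.1 v) s * fac (w z.2 v) t ∂lam) ^ n := by
  have hm : ∀ {α : Type} [MeasurableSpace α] {f g : α → ℝ} (θ : ℝ), Measurable f → Measurable g →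
      Measurable fun a => fac (w (f a) (g a)) θ := by
    intro α _ f g θ hf hg
    have := Complex.measurable_ofReal.comp (h.meas2 hf hg)
    exact measurable_const.add (this.mul_const _)
  have h1 : StronglyMeasurable (Function.uncurry fun (z : ℝ × ℝ) (v : ℝ) =>
      fac (w z.1 v) s * fac (w z.2 v) t) := by
    apply Measurable.stronglyMeasurable
    exact (hm (f := fun q : (ℝ × ℝ) × ℝ => q.1.1) (g := fun q => q.2) s (by fun_prop) (by fun_prop)).mul
      (hm (f := fun q : (ℝ × ℝ) × ℝ => q.1.2) (g := fun q => q.2) t (by fun_prop) (by fun_prop))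
  exact (hm _ measurable_fst measurable_snd).stronglyMeasurable.mul
    ((h1.integral_prod_right (ν := lam)).pow n)

lemma CF_bound {w : ℝ → ℝ → ℝ} (h : GW w) (n : ℕ) (s t : ℝ) (z : ℝ × ℝ) :
    ‖fac (w z.1 z.2) (s + t) * (∫ v, fac (w z.1 v) s * fac (w z.2 v) t ∂lam) ^ n‖ ≤ 1 := by
  have hf : ∀ x y θ, ‖fac (w x y) θ‖ ≤ 1 := fun x y θ => norm_fac (h.nonneg _ _) (h.le_one _ _)
  rw [norm_mul, norm_pow]
  refine mul_le_one₀ (hf _ _ _) (by positivity) (pow_le_one₀ (norm_nonneg _) ?_)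
  have := norm_integral_le_of_norm_le_const (μ := lam)
    (f := fun v => fac (w z.1 v) s * fac (w z.2 v) t) (C := 1) (ae_of_all _ fun v => ?_)
  · simpa using this
  · rw [norm_mul]; exact mul_le_one₀ (hf _ _ _) (norm_nonneg _) (hf _ _ _)

/-- characteristic function of two normalised degrees -/
def nCF (w : ℕ → ℝ → ℝ → ℝ) (p : ℕ → ℝ) (n : ℕ) (s t : ℝ) : ℂ :=
  ex (-((s + t) * ((n + 2 : ℕ) * p (n + 2)) / sg p (n + 2))) *
    CF (w (n + 2)) n (s / sg p (n + 2)) (t / sg p (n + 2))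

lemma Hyp.cont_ex : Continuous ex := by unfold ex; fun_prop

lemma Hyp.nCF_lim (h : Hyp w p μ ε C) (s t : ℝ) :
    Tendsto (fun n => nCF w p n s t) atTop (nhds (charFun (limLaw μ) s * charFun (limLaw μ) t)) := by
  have hμ := h.mu_meas
  have e0 : charFun (limLaw μ) s * charFun (limLaw μ) t =
      ∫ z, Complex.exp (-(s ^ 2 / 2 : ℝ) + -(t ^ 2 / 2 : ℝ) + s * Complex.I * μ z.1
        + t * Complex.I * μ z.2) ∂(lam.prod lam) := by
    rw [charFun_limLaw hμ, charFun_limLaw hμ, mul_mul_mul_comm,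
      ← integral_prod_mul (fun x => ex (s * μ x)) (fun x => ex (t * μ x)), ← integral_const_mul]
    refine integral_congr_ae (ae_of_all _ fun z => ?_)
    simp only [ex, ← Complex.exp_add]
    congr 1; push_cast; ring
  rw [e0]
  simp only [nCF, CF, ← integral_const_mul]
  refine tendsto_integral_of_dominated_convergence (fun _ => 1) ?_ (integrable_const _) ?_ ?_
  · intro n
    exact ((CF_meas (h.gw _) _ _ _).const_mul _).aestronglyMeasurable
  · intro n
    refine ae_of_all _ fun z => ?_
    rw [norm_mul, norm_ex, one_mul]
    exact CF_bound (h.gw _) _ _ _ z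
  · refine ae_of_all _ fun z => ?_
    have h2 := h.psi_pow z.1 z.2 s t
    have hang : ∀ c : ℝ, Tendsto (fun n => c / sg p (n + 2)) atTop (nhds 0) := fun c =>
      (tendsto_add_atTop_iff_nat 2).2 (h.div_sg c)
    have h3 : Tendsto (fun n => ex (-(2 * p (n+2) * ((s + t) / sg p (n + 2))))) atTop (nhds 1) := by
      rw [← ex_zero]
      refine (Hyp.cont_ex.tendsto 0).comp ?_
      rw [← neg_zero]
      refine Tendsto.neg ?_
      refine squeeze_zero_norm (a := fun n => 2 * |(s + t) / sg p (n + 2)|) (fun n => ?_)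
        (by simpa using (hang (s + t)).abs.const_mul 2)
      rw [norm_mul, norm_mul, Real.norm_eq_abs, Real.norm_eq_abs, Real.norm_eq_abs,
        abs_of_pos (h.p0 _), abs_two]
      have := h.p1 (n + 2)
      have := abs_nonneg ((s + t) / sg p (n + 2))
      nlinarith
    have h4 : Tendsto (fun n => fac (w (n+2) z.1 z.2) (s / sg p (n + 2) + t / sg p (n + 2)))
        atTop (nhds 1) := by
      rw [tendsto_iff_norm_sub_tendsto_zero]
      have hh : Tendsto (fun n => ‖ex (s / sg p (n + 2) + t / sg p (n + 2)) - 1‖) atTop (nhds 0) := by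
        have := (Hyp.cont_ex.tendsto 0).comp (by simpa using (hang s).add (hang t))
        rw [ex_zero] at this
        exact tendsto_iff_norm_sub_tendsto_zero.1 this
      refine squeeze_zero (fun _ => norm_nonneg _) (fun n => ?_) hh
      simp only [fac, add_sub_cancel_left]
      rw [norm_mul, Complex.norm_real, Real.norm_of_nonneg ((h.gw _).nonneg _ _)]
      have := (h.gw (n+2)).le_one z.1 z.2
      exact mul_le_of_le_one_left (norm_nonneg _) this
    have h5 := (h3.mul h4).mul h2
    rw [one_mul, one_mul] at h5
    refine h5.congr fun n => ?_
    rw [psi_fac, mul_pow, ← ex_add, ex_pow]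
    have : ex (-((s + t) * ((n + 2 : ℕ) * p (n + 2)) / sg p (n + 2))) =
        ex (-(2 * p (n+2) * ((s + t) / sg p (n + 2)))) *
        ex (n * (-(s / sg p (n + 2) * p (n + 2)) + -(t / sg p (n + 2) * p (n + 2)))) := by
      rw [← ex_add]; congr 1; push_cast; ring
    rw [this]; ring
end

/-- normalized degree -/
def Yv (p : ℕ → ℝ) (N : ℕ) (e : Edg N → Bool) (i : Fin N) : ℝ :=
  ((degree (toAdj e) i : ℝ) - N * p N) / sg p N

lemma charYv {w : ℕ → ℝ → ℝ → ℝ} (p : ℕ → ℝ) (n : ℕ) (h : GW (w (n + 2)))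
    (i : Fin (n + 2)) (j' : Fin (n + 1)) (s t : ℝ) :
    ∫ e, ex (s * Yv p (n + 2) e i + t * Yv p (n + 2) e (i.succAbove j')) ∂(Qm (w (n + 2)) (n + 2)) =
      nCF w p n s t := by
  rw [nCF, ← charDeg h i j', ← integral_const_mul]
  congr 1
  funext e
  rw [← ex_add]
  congr 1
  simp only [Yv]
  ring

/-- joint law of two normalized degrees -/
def nu (w : ℕ → ℝ → ℝ → ℝ) (p : ℕ → ℝ) (n : ℕ) (i : Fin (n + 2)) (j' : Fin (n + 1)) :
    Measure (WithLp 2 (ℝ × ℝ)) :=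
  (Qm (w (n + 2)) (n + 2)).map
    (fun e => WithLp.toLp 2 (Yv p (n + 2) e i, Yv p (n + 2) e (i.succAbove j')))

lemma nu_prob {w : ℕ → ℝ → ℝ → ℝ} (p : ℕ → ℝ) (n : ℕ) (h : GW (w (n + 2)))
    (i : Fin (n + 2)) (j' : Fin (n + 1)) : IsProbabilityMeasure (nu w p n i j') := by
  have := Qm_prob (n := n + 2) h
  exact Measure.isProbabilityMeasure_map (Measurable.of_discrete).aemeasurable

lemma charFun_nu {w : ℕ → ℝ → ℝ → ℝ} (p : ℕ → ℝ) (n : ℕ) (h : GW (w (n + 2)))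
    (i : Fin (n + 2)) (j' : Fin (n + 1)) (t : WithLp 2 (ℝ × ℝ)) :
    charFun (nu w p n i j') t = nCF w p n t.fst t.snd := by
  rw [← charYv p n h i j', charFun_apply, nu, integral_map (Measurable.of_discrete).aemeasurable
    (by fun_prop)]
  refine integral_congr_ae (ae_of_all _ fun e => ?_)
  simp only
  rw [ex, WithLp.prod_inner_apply]
  simp

lemma nu_eq {w : ℕ → ℝ → ℝ → ℝ} (p : ℕ → ℝ) (n : ℕ) (h : GW (w (n + 2)))
    (i : Fin (n + 2)) (j' : Fin (n + 1)) : nu w p n i j' = nu w p n 0 0 := by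
  have := nu_prob p n h i j'
  have := nu_prob p n h 0 0
  apply Measure.ext_of_charFun
  funext t
  rw [charFun_nu p n h, charFun_nu p n h]

section
variable {w : ℕ → ℝ → ℝ → ℝ} {p : ℕ → ℝ} {μ : ℝ → ℝ} {ε C : ℝ}

lemma limLaw_prob (hμ : Measurable μ) : IsProbabilityMeasure (limLaw μ) :=
  Measure.isProbabilityMeasure_map (by fun_prop)

lemma limLaw_atom (hμ : Measurable μ) (x : ℝ) : limLaw μ {x} = 0 := by
  have hm : Measurable (fun z : ℝ × ℝ => z.1 + μ z.2) := by fun_prop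
  have : NullSingletonClass (gaussianReal 0 1) := nullSingletonClass_gaussianReal one_ne_zero
  rw [limLaw, Measure.map_apply hm (measurableSet_singleton x),
    Measure.prod_apply_symm (hm (measurableSet_singleton x))]
  rw [lintegral_eq_zero_iff' (measurable_measure_prodMk_right
    (hm (measurableSet_singleton x))).aemeasurable]
  refine ae_of_all _ fun y => ?_
  refine measure_mono_null (t := {x - μ y}) ?_ (measure_singleton _)
  intro z hz
  simp at hz ⊢
  linarith

lemma Hyp.weak (h : Hyp w p μ ε C) {E : Set (WithLp 2 (ℝ × ℝ))}
    (hE : (((limLaw μ).prod (limLaw μ)).map (WithLp.toLp 2)) (frontier E) = 0) :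
    Tendsto (fun n => nu w p n 0 0 E) atTop
      (nhds ((((limLaw μ).prod (limLaw μ)).map (WithLp.toLp 2)) E)) := by
  have := limLaw_prob h.mu_meas
  let ν : ℕ → ProbabilityMeasure (WithLp 2 (ℝ × ℝ)) := fun n =>
    ⟨nu w p n 0 0, nu_prob p n (h.gw _) 0 0⟩
  let ν0 : ProbabilityMeasure (WithLp 2 (ℝ × ℝ)) :=
    ⟨((limLaw μ).prod (limLaw μ)).map (WithLp.toLp 2),
      Measure.isProbabilityMeasure_map (by fun_prop)⟩
  have hl : Tendsto ν atTop (nhds ν0) := by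
    apply ProbabilityMeasure.tendsto_of_tendsto_charFun
    intro t
    simp only [ν, ν0, ProbabilityMeasure.coe_mk]
    rw [charFun_prod]
    simp_rw [charFun_nu p _ (h.gw _)]
    exact h.nCF_lim _ _
  exact ProbabilityMeasure.tendsto_measure_of_null_frontier_of_tendsto' hl hE

lemma Hyp.null (h : Hyp w p μ ε C) (x : ℝ) {S : Set (WithLp 2 (ℝ × ℝ))}
    (hS : S ⊆ {v | v.fst = x} ∪ {v | v.snd = x}) :
    (((limLaw μ).prod (limLaw μ)).map (WithLp.toLp 2)) S = 0 := by
  have := limLaw_prob h.mu_meas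
  refine measure_mono_null hS ?_
  rw [← MeasurableEquiv.coe_toLp, MeasurableEquiv.map_apply]
  refine measure_mono_null (t := {x} ×ˢ Set.univ ∪ Set.univ ×ˢ {x}) ?_ ?_
  · intro z hz
    simpa using hz
  · refine measure_union_null ?_ ?_ <;> simp [Measure.prod_prod, limLaw_atom h.mu_meas]

lemma frontier_fst (x : ℝ) : frontier {v : WithLp 2 (ℝ × ℝ) | v.fst ≤ x} ⊆ {v | v.fst = x} :=
  frontier_le_subset_eq (by fun_prop) (by fun_prop)

lemma frontier_snd (x : ℝ) : frontier {v : WithLp 2 (ℝ × ℝ) | v.snd ≤ x} ⊆ {v | v.snd = x} :=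
  frontier_le_subset_eq (by fun_prop) (by fun_prop)

lemma Hyp.q1 (h : Hyp w p μ ε C) (x : ℝ) :
    Tendsto (fun n => (nu w p n 0 0).real {v | v.fst ≤ x}) atTop
      (nhds ((limLaw μ).real (Set.Iic x))) := by
  have := limLaw_prob h.mu_meas
  have h1 := h.weak (h.null x ((frontier_fst x).trans Set.subset_union_left))
  have e : (((limLaw μ).prod (limLaw μ)).map (WithLp.toLp 2)) {v | v.fst ≤ x} =
      limLaw μ (Set.Iic x) := by
    rw [← MeasurableEquiv.coe_toLp, MeasurableEquiv.map_apply]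
    have : (MeasurableEquiv.toLp 2 (ℝ × ℝ)) ⁻¹' {v | v.fst ≤ x} = Set.Iic x ×ˢ Set.univ := by
      ext z; simp
    rw [this, Measure.prod_prod]; simp
  rw [e] at h1
  exact (ENNReal.tendsto_toReal (measure_ne_top _ _)).comp h1

lemma Hyp.q2 (h : Hyp w p μ ε C) (x : ℝ) :
    Tendsto (fun n => (nu w p n 0 0).real {v | v.fst ≤ x ∧ v.snd ≤ x}) atTop
      (nhds ((limLaw μ).real (Set.Iic x) ^ 2)) := by
  have := limLaw_prob h.mu_meas
  have hf : frontier {v : WithLp 2 (ℝ × ℝ) | v.fst ≤ x ∧ v.snd ≤ x} ⊆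
      {v | v.fst = x} ∪ {v | v.snd = x} := by
    refine (frontier_inter_subset {v : WithLp 2 (ℝ × ℝ) | v.fst ≤ x} {v | v.snd ≤ x}).trans ?_
    exact Set.union_subset_union (Set.inter_subset_left.trans (frontier_fst x))
      (Set.inter_subset_right.trans (frontier_snd x))
  have h1 := h.weak (h.null x hf)
  have e : (((limLaw μ).prod (limLaw μ)).map (WithLp.toLp 2)) {v | v.fst ≤ x ∧ v.snd ≤ x} =
      limLaw μ (Set.Iic x) ^ 2 := by
    rw [← MeasurableEquiv.coe_toLp, MeasurableEquiv.map_apply]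
    have : (MeasurableEquiv.toLp 2 (ℝ × ℝ)) ⁻¹' {v | v.fst ≤ x ∧ v.snd ≤ x} =
        Set.Iic x ×ˢ Set.Iic x := by
      ext z; simp [Prod.le_def]
    rw [this, Measure.prod_prod, sq]
  rw [e] at h1
  have := (ENNReal.tendsto_toReal (ENNReal.pow_ne_top (measure_ne_top _ _))).comp h1
  rw [ENNReal.toReal_pow] at this
  exact this

/-- indicator of a small normalized degree -/
def Iv (p : ℕ → ℝ) (N : ℕ) (x : ℝ) (i : Fin N) (e : Edg N → Bool) : ℝ :=
  if Yv p N e i ≤ x then 1 else 0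

lemma emp_eq (p : ℕ → ℝ) (N : ℕ) (x : ℝ) (e : Edg N → Bool) :
    empCDF (toAdj e) (p N) x = (∑ i, Iv p N x i e) / N := by
  unfold empCDF Iv Yv sg
  rw [Finset.sum_boole]

lemma int_Iv (h : Hyp w p μ ε C) (n : ℕ) (x : ℝ) (i : Fin (n + 2)) :
    ∫ e, Iv p (n + 2) x i e ∂(Qm (w (n + 2)) (n + 2)) = (nu w p n 0 0).real {v | v.fst ≤ x} := by
  rw [← nu_eq p n (h.gw _) i 0, nu, measureReal_def, Measure.map_apply (Measurable.of_discrete)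
    (measurableSet_le (by fun_prop) (by fun_prop)), ← measureReal_def,
    ← integral_indicator_one (MeasurableSet.of_discrete)]
  refine integral_congr_ae (ae_of_all _ fun e => ?_)
  simp [Iv, Set.indicator_apply]

lemma int_IIv (h : Hyp w p μ ε C) (n : ℕ) (x : ℝ) (i : Fin (n + 2)) (j' : Fin (n + 1)) :
    ∫ e, Iv p (n + 2) x i e * Iv p (n + 2) x (i.succAbove j') e ∂(Qm (w (n + 2)) (n + 2)) =
      (nu w p n 0 0).real {v | v.fst ≤ x ∧ v.snd ≤ x} := by
  have hm : MeasurableSet {v : WithLp 2 (ℝ × ℝ) | v.fst ≤ x ∧ v.snd ≤ x} := by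
    have h1 : MeasurableSet {v : WithLp 2 (ℝ × ℝ) | v.fst ≤ x} :=
      measurableSet_le (by fun_prop) (by fun_prop)
    have h2 : MeasurableSet {v : WithLp 2 (ℝ × ℝ) | v.snd ≤ x} :=
      measurableSet_le (by fun_prop) (by fun_prop)
    exact h1.inter h2
  rw [← nu_eq p n (h.gw _) i j', nu, measureReal_def, Measure.map_apply (Measurable.of_discrete)
    hm, ← measureReal_def,
    ← integral_indicator_one (MeasurableSet.of_discrete)]
  refine integral_congr_ae (ae_of_all _ fun e => ?_)
  simp only [Iv, Set.indicator_apply, Set.mem_preimage, Set.mem_ofPred_eq, Pi.one_apply]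
  by_cases h1 : Yv p (n + 2) e i ≤ x <;> by_cases h2 : Yv p (n + 2) e (i.succAbove j') ≤ x <;>
    simp [h1, h2]

lemma second_moment (h : Hyp w p μ ε C) (n : ℕ) (x F : ℝ) :
    ∫ e, (empCDF (toAdj e) (p (n + 2)) x - F) ^ 2 ∂(Qm (w (n + 2)) (n + 2)) =
      (1 / ((n : ℝ) + 2)) * (nu w p n 0 0).real {v | v.fst ≤ x} +
      (1 - 1 / ((n : ℝ) + 2)) * (nu w p n 0 0).real {v | v.fst ≤ x ∧ v.snd ≤ x}
      - 2 * F * (nu w p n 0 0).real {v | v.fst ≤ x} + F ^ 2 := by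
  have := Qm_prob (n := n + 2) (h.gw (n + 2))
  have hN : (n : ℝ) + 2 ≠ 0 := by positivity
  have e1 : ∀ e, (empCDF (toAdj e) (p (n + 2)) x - F) ^ 2 =
      (1 / ((n : ℝ) + 2) ^ 2) * ((∑ i, Iv p (n + 2) x i e) +
        ∑ i, ∑ j', Iv p (n + 2) x i e * Iv p (n + 2) x (i.succAbove j') e)
      - (2 * F / ((n : ℝ) + 2)) * (∑ i, Iv p (n + 2) x i e) + F ^ 2 := by
    intro e
    have e2 : (∑ i, Iv p (n + 2) x i e) ^ 2 = (∑ i, Iv p (n + 2) x i e) +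
        ∑ i, ∑ j', Iv p (n + 2) x i e * Iv p (n + 2) x (i.succAbove j') e := by
      rw [sq, Finset.sum_mul, ← Finset.sum_add_distrib]
      refine Finset.sum_congr rfl fun i _ => ?_
      rw [Fin.sum_univ_succAbove _ i, mul_add, Finset.mul_sum]
      congr 1
      unfold Iv; split_ifs <;> simp
    rw [emp_eq, ← e2]
    push_cast
    field_simp
    ring
  simp_rw [e1]
  have hi : ∀ f : (Edg (n + 2) → Bool) → ℝ, Integrable f (Qm (w (n + 2)) (n + 2)) :=
    fun f => Integrable.of_finite
  rw [integral_add (hi _) (hi _), integral_sub (hi _) (hi _), integral_const_mul,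
    integral_const_mul, integral_add (hi _) (hi _), integral_finsetSum _ (fun i _ => hi _),
    integral_finsetSum _ (fun i _ => hi _)]
  simp_rw [integral_finsetSum _ (fun i _ => hi _), int_IIv h, int_Iv h]
  simp
  field_simp
  ring

lemma Hyp.moment_lim (h : Hyp w p μ ε C) (x : ℝ) :
    Tendsto (fun n : ℕ => ∫ e, (empCDF (toAdj e) (p (n + 2)) x - (limLaw μ).real (Set.Iic x)) ^ 2
      ∂(Qm (w (n + 2)) (n + 2))) atTop (nhds 0) := by
  simp_rw [second_moment h]
  set F := (limLaw μ).real (Set.Iic x)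
  have h0 : Tendsto (fun n : ℕ => 1 / ((n : ℝ) + 2)) atTop (nhds 0) := by
    have := (tendsto_add_atTop_iff_nat 2).2 (tendsto_one_div_atTop_nhds_zero_nat (𝕜 := ℝ))
    simpa using this
  have := (((h0.mul (h.q1 x)).add ((h0.const_sub 1).mul (h.q2 x))).sub
    ((h.q1 x).const_mul (2 * F))).add_const (F ^ 2)
  refine this.trans (le_of_eq ?_)
  congr 1
  simp only [F]
  ring

lemma Hyp.prob_lim (h : Hyp w p μ ε C) (x : ℝ) {δ : ℝ} (hδ : 0 < δ) :
    Tendsto (fun n : ℕ => Qm (w (n + 2)) (n + 2)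
      {e | δ ≤ |empCDF (toAdj e) (p (n + 2)) x - (limLaw μ).real (Set.Iic x)|}) atTop (nhds 0) := by
  have h1 := (h.moment_lim x).const_mul (1 / δ ^ 2)
  rw [mul_zero] at h1
  have h2 := ENNReal.tendsto_ofReal h1
  rw [ENNReal.ofReal_zero] at h2
  refine tendsto_of_tendsto_of_tendsto_of_le_of_le tendsto_const_nhds h2 (fun _ => bot_le) ?_
  intro n
  have := Qm_prob (n := n + 2) (h.gw (n + 2))
  have m := mul_meas_ge_le_integral_of_nonneg (μ := Qm (w (n + 2)) (n + 2))
    (f := fun e => (empCDF (toAdj e) (p (n + 2)) x - (limLaw μ).real (Set.Iic x)) ^ 2)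
    (ae_of_all _ fun e => sq_nonneg _) Integrable.of_finite (δ ^ 2)
  have hs : {e : Edg (n + 2) → Bool | δ ^ 2 ≤ (empCDF (toAdj e) (p (n + 2)) x - (limLaw μ).real (Set.Iic x)) ^ 2} =
      {e : Edg (n + 2) → Bool |
        δ ≤ |empCDF (toAdj e) (p (n + 2)) x - (limLaw μ).real (Set.Iic x)|} := by
    ext e
    simp only [Set.mem_ofPred_eq]
    rw [sq_le_sq, abs_of_pos hδ]
  rw [hs] at m
  simp only
  rw [← ofReal_measureReal]
  apply ENNReal.ofReal_le_ofReal
  rw [one_div, ← div_eq_inv_mul, le_div_iff₀ (by positivity), mul_comm]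
  exact m

lemma polya (ν : Measure ℝ) [IsProbabilityMeasure ν] (hν : ∀ x, ν {x} = 0) {δ : ℝ} (hδ : 0 < δ) :
    ∃ T : Finset ℝ, ∃ η > 0, ∀ G : ℝ → ℝ, Monotone G → (∀ x, 0 ≤ G x) → (∀ x, G x ≤ 1) →
      (∀ x ∈ T, |G x - ν.real (Set.Iic x)| < η) → ∀ x, |G x - ν.real (Set.Iic x)| ≤ δ := by
  have hF : ∀ x, ν.real (Set.Iic x) = cdf ν x := fun x => (cdf_eq_real ν x).symm
  simp_rw [hF]
  have hmono : Monotone (cdf ν) := monotone_cdf ν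
  have hcont : Continuous (cdf ν) := by
    rw [continuous_iff_continuousAt]
    intro x
    rw [hmono.continuousAt_iff_leftLim_eq_rightLim, (cdf ν).rightLim_eq]
    have := (cdf ν).measure_singleton x
    rw [measure_cdf, hν] at this
    have h2 := ENNReal.ofReal_eq_zero.1 this.symm
    have h3 := hmono.leftLim_le (le_refl x)
    linarith
  obtain ⟨N, hN⟩ := exists_nat_gt (2 / δ)
  have hNpos : (0 : ℝ) < N := lt_trans (by positivity) hN
  have hx : ∀ j : ℕ, ∃ x, 0 < j → j < N → cdf ν x = j / N := by
    intro j
    by_cases hj : 0 < j ∧ j < N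
    · have hj1 : (0 : ℝ) < j / N := by have := hj.1; positivity
      have hj2 : (j : ℝ) / N < 1 := by rw [div_lt_one hNpos]; exact_mod_cast hj.2
      obtain ⟨a, ha⟩ := ((tendsto_cdf_atBot ν).eventually (gt_mem_nhds hj1)).exists
      obtain ⟨b, hb⟩ := ((tendsto_cdf_atTop ν).eventually (lt_mem_nhds hj2)).exists
      obtain ⟨x, hx⟩ := mem_range_of_exists_le_of_exists_ge hcont ⟨a, ha.le⟩ ⟨b, hb.le⟩
      exact ⟨x, fun _ _ => hx⟩
    · exact ⟨0, fun h1 h2 => absurd ⟨h1, h2⟩ hj⟩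
  choose X hX using hx
  have hNδ : 1 / (N : ℝ) < δ / 2 := by
    rw [div_lt_iff₀ hδ] at hN
    rw [div_lt_iff₀ hNpos]; linarith
  refine ⟨(Finset.range N).image X, δ / 2, by positivity, ?_⟩
  intro G hG h0 h1 hT x
  have hT' : ∀ j, 0 < j → j < N → |G (X j) - j / N| < δ / 2 := by
    intro j hj hj'
    have := hT (X j) (Finset.mem_image_of_mem _ (Finset.mem_range.2 hj'))
    rwa [hX j hj hj'] at this
  set f := cdf ν x with hf
  have f0 : 0 ≤ f := cdf_nonneg ν x
  have f1 : f ≤ 1 := cdf_le_one ν x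
  have hNf : 0 ≤ N * f := by positivity
  rw [abs_le]
  constructor
  · set k := ⌈N * f⌉₊ - 1 with hk
    by_cases hk0 : 0 < k
    · have hc1 : (⌈N * f⌉₊ : ℝ) < N * f + 1 := Nat.ceil_lt_add_one hNf
      have hc2 : N * f ≤ (⌈N * f⌉₊ : ℝ) := Nat.le_ceil _
      have hke : (⌈N * f⌉₊ : ℝ) = k + 1 := by
        have : ⌈N * f⌉₊ = k + 1 := by omega
        rw [this]; push_cast; ring
      have hkN : k < N := by
        have : (k : ℝ) < N := by nlinarith
        exact_mod_cast this
      have hXx : X k ≤ x := by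
        by_contra hcon
        have := hmono (le_of_not_ge hcon)
        rw [hX k hk0 hkN, ← hf, le_div_iff₀ hNpos] at this
        linarith
      have a := (abs_lt.1 (hT' k hk0 hkN)).1
      have b := hG hXx
      have c : f - 1 / N ≤ k / N := by
        rw [sub_le_iff_le_add, ← add_div, le_div_iff₀ hNpos]; linarith
      linarith
    · have : (⌈N * f⌉₊ : ℝ) ≤ 1 := by
        have : ⌈N * f⌉₊ ≤ 1 := by omega
        exact_mod_cast this
      have h3 : N * f ≤ 1 := (Nat.le_ceil _).trans this
      have h4 : f ≤ 1 / N := by rw [le_div_iff₀ hNpos]; linarith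
      have := h0 x
      linarith
  · set k := ⌊N * f⌋₊ + 1 with hk
    have hc1 : (⌊N * f⌋₊ : ℝ) ≤ N * f := Nat.floor_le hNf
    have hc2 : N * f < (⌊N * f⌋₊ : ℝ) + 1 := Nat.lt_floor_add_one _
    have hke : (k : ℝ) = (⌊N * f⌋₊ : ℝ) + 1 := by rw [hk]; push_cast; ring
    by_cases hkN : k < N
    · have hk0 : 0 < k := by omega
      have hXx : x ≤ X k := by
        by_contra hcon
        have := hmono (le_of_not_ge hcon)
        rw [hX k hk0 hkN, ← hf, div_le_iff₀ hNpos] at this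
        linarith
      have a := (abs_lt.1 (hT' k hk0 hkN)).2
      have b := hG hXx
      have c : (k : ℝ) / N ≤ f + 1 / N := by
        rw [← sub_le_iff_le_add, ← sub_div, div_le_iff₀ hNpos]; linarith
      linarith
    · have : (N : ℝ) ≤ k := by exact_mod_cast (not_lt.1 hkN)
      have h4 : 1 - f ≤ 1 / N := by rw [le_div_iff₀ hNpos]; linarith
      have := h1 x
      linarith

lemma emp_mono {N : ℕ} (A : Fin N → Fin N → Bool) (q : ℝ) : Monotone (empCDF A q) := by
  intro x y hxy
  unfold empCDF
  refine div_le_div_of_nonneg_right ?_ (by positivity)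
  norm_cast
  refine Finset.card_le_card fun i hi => ?_
  simp only [Finset.mem_filter, Finset.mem_univ, true_and] at hi ⊢
  exact hi.trans hxy

lemma emp_nonneg {N : ℕ} (A : Fin N → Fin N → Bool) (q x : ℝ) : 0 ≤ empCDF A q x := by
  unfold empCDF; positivity

lemma emp_le_one {N : ℕ} (A : Fin N → Fin N → Bool) (q x : ℝ) : empCDF A q x ≤ 1 := by
  unfold empCDF
  refine div_le_one_of_le₀ ?_ (by positivity)
  norm_cast
  exact (Finset.card_le_univ _).trans (by simp)

lemma Hyp.sup_lim (h : Hyp w p μ ε C) {δ : ℝ} (hδ : 0 < δ) :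
    Tendsto (fun n : ℕ => Qm (w n) n
      {e | δ < ⨆ x : ℝ, |empCDF (toAdj e) (p n) x - (limLaw μ).real (Set.Iic x)|})
      atTop (nhds 0) := by
  have := limLaw_prob h.mu_meas
  obtain ⟨T, η, hη, hT⟩ := polya (limLaw μ) (limLaw_atom h.mu_meas) hδ
  rw [← tendsto_add_atTop_iff_nat 2]
  have hs := tendsto_finsetSum T (fun x _ => h.prob_lim x hη)
  rw [Finset.sum_const_zero] at hs
  refine tendsto_of_tendsto_of_tendsto_of_le_of_le tendsto_const_nhds hs (fun _ => bot_le) ?_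
  intro n
  refine le_trans (measure_mono ?_) (measure_biUnion_finset_le T _)
  intro e he
  by_contra hcon
  simp only [Set.mem_iUnion, Set.mem_ofPred_eq, not_exists, not_le] at hcon he
  refine absurd he (not_lt.2 (ciSup_le ?_))
  exact hT _ (emp_mono _ _) (emp_nonneg _ _) (emp_le_one _ _) (fun x hx => hcon x hx)
end

/-- clamp to the unit interval -/
def cl (u : ℝ) : ℝ := max 0 (min 1 u)

lemma cl_mem (u : ℝ) : cl u ∈ Set.Icc (0:ℝ) 1 :=
  ⟨le_max_left _ _, max_le zero_le_one (min_le_left _ _)⟩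

lemma cl_eq {u : ℝ} (h : u ∈ Set.Ioo (0:ℝ) 1) : cl u = u := by
  unfold cl; rw [min_eq_right h.2.le, max_eq_right h.1.le]

lemma cl_meas : Measurable cl := by unfold cl; fun_prop

lemma lam_ae : ∀ᵐ u ∂lam, u ∈ Set.Ioo (0:ℝ) 1 := ae_restrict_mem measurableSet_Ioo

lemma Qm_congr (w : ℝ → ℝ → ℝ) (n : ℕ) : Qm w n = Qm (fun u v => w (cl u) (cl v)) n := by
  unfold Qm
  refine Finset.sum_congr rfl fun e _ => ?_
  congr 1
  unfold eMass
  refine lintegral_congr_ae ?_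
  have h : ∀ᵐ u ∂(Measure.pi fun _ : Fin n => lam), ∀ i, cl (u i) = u i := by
    rw [ae_all_iff]
    intro i
    exact (Measure.quasiMeasurePreserving_eval (fun _ : Fin n => lam) i).ae
      (lam_ae.mono fun u hu => cl_eq hu)
  filter_upwards [h] with u hu
  unfold graphonEdgeMass
  simp_rw [hu]

lemma lam_eq {κ : ℝ} (hκ0 : 0 < κ) (hκ : κ < 1) :
    lam = ENNReal.ofReal κ • unifMeasure 0 κ + ENNReal.ofReal (1 - κ) • unifMeasure κ 1 := by
  refine Measure.ext fun S hS => ?_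
  simp [← lam_mix hκ0 hκ S hS]

lemma unif_ae {a b : ℝ} (ha : 0 ≤ a) (hb : b ≤ 1) : ∀ᵐ u ∂(unifMeasure a b), cl u = u := by
  unfold unifMeasure
  refine Measure.ae_smul_measure ?_ _
  filter_upwards [ae_restrict_mem measurableSet_Ioo] with u hu
  exact cl_eq ⟨ha.trans_lt hu.1, hu.2.trans_le hb⟩

lemma mix_congr (μ : ℝ → ℝ) {a b : ℝ} (ha : 0 ≤ a) (hab : a < b) (hb : b ≤ 1) (x : ℝ) :
    mixCDF μ a b x = mixCDF (fun u => μ (cl u)) a b x := by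
  have := unif_finite hab
  unfold mixCDF
  congr 1
  refine measure_congr ?_
  have h : ∀ᵐ z ∂((gaussianReal 0 1).prod (unifMeasure a b)), cl z.2 = z.2 :=
    Measure.quasiMeasurePreserving_snd.ae (unif_ae ha hb)
  filter_upwards [h] with z hz
  apply propext
  change z.1 + μ z.2 ≤ x ↔ z.1 + μ (cl z.2) ≤ x
  rw [hz]

lemma mix_eq {κ : ℝ} (hκ0 : 0 < κ) (hκ : κ < 1) (μ : ℝ → ℝ)
    (hμ : Measurable (fun u => μ (cl u))) (x : ℝ) :
    κ * mixCDF μ 0 κ x + (1 - κ) * mixCDF μ κ 1 x =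
      (limLaw (fun u => μ (cl u))).real (Set.Iic x) := by
  rw [mix_congr μ le_rfl hκ0 hκ.le, mix_congr μ hκ0.le hκ le_rfl]
  have := unif_finite hκ0
  have := unif_finite hκ
  have hm : Measurable (fun z : ℝ × ℝ => z.1 + μ (cl z.2)) :=
    measurable_fst.add (hμ.comp measurable_snd)
  rw [limLaw, measureReal_def, Measure.map_apply hm measurableSet_Iic,
    Measure.prod_apply_symm (hm measurableSet_Iic), lam_eq hκ0 hκ, lintegral_add_measure,
    lintegral_smul_measure, lintegral_smul_measure, ← Measure.prod_apply_symm (hm measurableSet_Iic),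
    ← Measure.prod_apply_symm (hm measurableSet_Iic), smul_eq_mul, smul_eq_mul,
    ENNReal.toReal_add (ENNReal.mul_ne_top (by simp) (measure_ne_top _ _))
      (ENNReal.mul_ne_top (by simp) (measure_ne_top _ _)), ENNReal.toReal_mul, ENNReal.toReal_mul,
    ENNReal.toReal_ofReal hκ0.le, ENNReal.toReal_ofReal (by linarith)]
  rfl

theorem statement_5(κ εw : ℝ) (hκ0 : 0 < κ) (hκ : κ < 1 / 2) (hεw : 0 < εw)
    (w : ℕ → ℝ → ℝ → ℝ) (p : ℕ → ℝ) (μ : ℝ → ℝ)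
    (hw_symm : ∀ n u v, w n u v = w n v u)
    (hw_meas : ∀ n, Measurable (Function.uncurry (w n)))
    (hw_range : ∀ n, ∀ u ∈ Set.Icc (0:ℝ) 1, ∀ v ∈ Set.Icc (0:ℝ) 1,
      w n u v ∈ Set.Icc (0:ℝ) 1)
    -- Assumption 1
    (hp : ∀ n, p n ∈ Set.Ioo εw (1 - εw))
    (hconc : ∃ C : ℝ, ∀ n : ℕ, 1 ≤ n → ∀ u ∈ Set.Icc (0:ℝ) 1,
      ∀ v ∈ Set.Icc (0:ℝ) 1, |w n u v - p n| ≤ C / Real.sqrt n)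
    -- Assumption 2
    (hmean : ∀ u ∈ Set.Icc (0:ℝ) 1,
      Tendsto (fun n : ℕ =>
          Real.sqrt (n / (p n * (1 - p n))) * ∫ v in (0:ℝ)..1, (w n u v - p n))
        atTop (nhds (μ u)))
    (Ω : ℕ → Type) [mΩ : ∀ n, MeasurableSpace (Ω n)] (P : ∀ n, Measure (Ω n))
    (c : ∀ n, Ω n → Fin n → Bool) (U : ∀ n, Ω n → Fin n → ℝ)
    (A : ∀ n, Ω n → Fin n → Fin n → Bool)
    (hmodel : ∀ n, IsLabelledGraphon (P n) n (w n) κ (c n) (U n) (A n)) :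
    ∀ ε > 0, Tendsto
      (fun n => P n {ω | ε < ⨆ x : ℝ, |empCDF (A n ω) (p n) x -
        (κ * mixCDF μ 0 κ x + (1 - κ) * mixCDF μ κ 1 x)|})
      atTop (nhds 0) := by
  intro ε hε
  obtain ⟨C, hC⟩ := hconc
  have hκ1 : κ < 1 := by linarith
  have H : Hyp (fun n u v => w n (cl u) (cl v)) p (fun u => μ (cl u)) εw C := by
    refine ⟨fun n => ⟨fun u v => hw_symm n _ _, ?_, fun u v => (hw_range n _ (cl_mem u) _ (cl_mem v)).1,
      fun u v => (hw_range n _ (cl_mem u) _ (cl_mem v)).2⟩, hεw, hp,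
      fun n hn u v => hC n hn _ (cl_mem u) _ (cl_mem v), fun u => ?_⟩
    · exact (hw_meas n).comp ((cl_meas.comp measurable_fst).prodMk (cl_meas.comp measurable_snd))
    · refine (hmean _ (cl_mem u)).congr fun n => ?_
      congr 1
      rw [intervalIntegral.integral_of_le zero_le_one, integral_Ioc_eq_integral_Ioo]
      refine integral_congr_ae ?_
      filter_upwards [lam_ae] with v hv
      rw [cl_eq hv]
  simp_rw [mix_eq hκ0 hκ1 μ H.mu_meas]
  refine tendsto_of_tendsto_of_tendsto_of_le_of_le tendsto_const_nhds (H.sup_lim hε)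
    (fun _ => bot_le) ?_
  intro n
  have := model_le hκ0 hκ1 (hmodel n) {a | ε < ⨆ x : ℝ, |empCDF a (p n) x -
    (limLaw (fun u => μ (cl u))).real (Set.Iic x)|}
  rw [Qm_congr] at this
  exact this

end
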